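/- arXiv:1509.02141 — 4 statements merged into one kernel-verified Lean document; each statement's English description precedes it below -/
import Mathlib

section
/- Let ν be a positive Borel measure on ℝ that is 2π-periodic (ν(A + 2π) = ν(A) for every Borel set A) and finite on compact sets, let p ≥ 1 and δ ∈ (0,π). Then ∫_{[−π,π)} ν((θ−δ, θ+δ))^{p−1} dν(θ) ≤ (2^{p+1}/δ) · ∫_{[−π,π)} ν((θ−δ, θ+δ))^p dθ. -/
open MeasureTheory

lemma aux_meas (ν : Measure ℝ) [SFinite ν] (δ : ℝ) :
    Measurable (fun t : ℝ => ν (Set.Ioo (t - δ) (t + δ))) := by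
  have hs : MeasurableSet {z : ℝ × ℝ | z.1 - δ < z.2 ∧ z.2 < z.1 + δ} := by
    exact (measurableSet_lt (f := fun z : ℝ × ℝ => z.1 - δ) (g := fun z : ℝ × ℝ => z.2)
      (by fun_prop) (by fun_prop)).inter
      (measurableSet_lt (f := fun z : ℝ × ℝ => z.2) (g := fun z : ℝ × ℝ => z.1 + δ)
      (by fun_prop) (by fun_prop))
  exact measurable_measure_prodMk_left (ν := ν) hs

lemma aux_pt (ν : Measure ℝ) (q : ℝ) (hq : 0 ≤ q) (δ : ℝ) (θ : ℝ) :
    ENNReal.ofReal δ * (ν (Set.Ioo (θ - δ) (θ + δ))) ^ q ≤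
      2 ^ q * ∫⁻ t in Set.Ioo (θ - δ) (θ + δ), (ν (Set.Ioo (t - δ) (t + δ))) ^ q := by
  rcases le_or_gt δ 0 with hδ | hδ
  · simp [ENNReal.ofReal_of_nonpos hδ]
  have key : ∀ (S T : Set ℝ), MeasurableSet T → volume T = ENNReal.ofReal δ →
      T ⊆ Set.Ioo (θ - δ) (θ + δ) → (∀ t ∈ T, S ⊆ Set.Ioo (t - δ) (t + δ)) →
      ν (Set.Ioo (θ - δ) (θ + δ)) ≤ 2 * ν S →
      ENNReal.ofReal δ * (ν (Set.Ioo (θ - δ) (θ + δ))) ^ q ≤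
      2 ^ q * ∫⁻ t in Set.Ioo (θ - δ) (θ + δ), (ν (Set.Ioo (t - δ) (t + δ))) ^ q := by
    intro S T hT hvol hsub hST hle
    calc ENNReal.ofReal δ * (ν (Set.Ioo (θ - δ) (θ + δ))) ^ q
        ≤ ENNReal.ofReal δ * (2 * ν S) ^ q := by gcongr
      _ = 2 ^ q * ∫⁻ t in T, (ν S) ^ q := by
          rw [ENNReal.mul_rpow_of_nonneg _ _ hq, setLIntegral_const, hvol]; ring
      _ ≤ 2 ^ q * ∫⁻ t in T, (ν (Set.Ioo (t - δ) (t + δ))) ^ q := by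
          gcongr 2 ^ q * ?_
          apply setLIntegral_mono' hT
          intro t ht
          exact ENNReal.rpow_le_rpow (measure_mono (hST t ht)) hq
      _ ≤ _ := by
          gcongr 2 ^ q * ?_
          exact lintegral_mono_set hsub
  have hcov : ν (Set.Ioo (θ - δ) (θ + δ)) ≤
      ν (Set.Ioc (θ - δ) θ) + ν (Set.Ico θ (θ + δ)) := by
    refine le_trans (measure_mono ?_) (measure_union_le _ _)
    intro x hx
    rcases le_total x θ with h | h
    · left; exact ⟨hx.1, h⟩
    · right; exact ⟨h, hx.2⟩
  rcases le_total (ν (Set.Ioc (θ - δ) θ)) (ν (Set.Ico θ (θ + δ))) with h | h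
  · refine key (Set.Ico θ (θ + δ)) (Set.Ioo θ (θ + δ)) measurableSet_Ioo (by simp) ?_ ?_ ?_
    · intro x hx; exact ⟨by linarith [hx.1], hx.2⟩
    · intro t ht x hx; exact ⟨by linarith [hx.1, ht.2], by linarith [hx.2, ht.1]⟩
    · rw [two_mul]; exact hcov.trans (by gcongr)
  · refine key (Set.Ioc (θ - δ) θ) (Set.Ioo (θ - δ) θ) measurableSet_Ioo (by simp) ?_ ?_ ?_
    · intro x hx; exact ⟨hx.1, by linarith [hx.2]⟩
    · intro t ht x hx; exact ⟨by linarith [hx.1, ht.2], by linarith [hx.2, ht.1]⟩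
    · rw [two_mul]; exact hcov.trans (by gcongr)

lemma aux_fub (ν : Measure ℝ) [SFinite ν] (f : ℝ → ENNReal) (hf : Measurable f)
    (δ : ℝ) (hδπ : δ < Real.pi) :
    ∫⁻ θ in Set.Ico (-Real.pi) Real.pi, (∫⁻ t in Set.Ioo (θ - δ) (θ + δ), f t) ∂ν ≤
      ∫⁻ t in Set.Ico (-(3 * Real.pi)) (3 * Real.pi), f t * ν (Set.Ioo (t - δ) (t + δ)) := by
  have hs : MeasurableSet {z : ℝ × ℝ | z.1 - δ < z.2 ∧ z.2 < z.1 + δ} := by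
    exact (measurableSet_lt (f := fun z : ℝ × ℝ => z.1 - δ) (g := fun z : ℝ × ℝ => z.2)
      (by fun_prop) (by fun_prop)).inter
      (measurableSet_lt (f := fun z : ℝ × ℝ => z.2) (g := fun z : ℝ × ℝ => z.1 + δ)
      (by fun_prop) (by fun_prop))
  set s := {z : ℝ × ℝ | z.1 - δ < z.2 ∧ z.2 < z.1 + δ} with hsdef
  have hpi := Real.pi_pos
  calc ∫⁻ θ in Set.Ico (-Real.pi) Real.pi, (∫⁻ t in Set.Ioo (θ - δ) (θ + δ), f t) ∂ν
      ≤ ∫⁻ θ in Set.Ico (-Real.pi) Real.pi,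
          (∫⁻ t in Set.Ico (-(3 * Real.pi)) (3 * Real.pi),
            s.indicator (fun z => f z.2) (θ, t)) ∂ν := by
        apply setLIntegral_mono' measurableSet_Ico
        intro θ hθ
        have hsub : Set.Ioo (θ - δ) (θ + δ) ⊆ Set.Ico (-(3 * Real.pi)) (3 * Real.pi) := by
          intro x hx
          exact ⟨by linarith [hx.1, hθ.1], by linarith [hx.2, hθ.2]⟩
        refine le_trans (le_of_eq ?_) (lintegral_mono_set hsub)
        apply setLIntegral_congr_fun measurableSet_Ioo
        intro t ht
        have : (θ, t) ∈ s := ht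
        simp [Set.indicator_of_mem this]
    _ = ∫⁻ t in Set.Ico (-(3 * Real.pi)) (3 * Real.pi),
          ∫⁻ θ in Set.Ico (-Real.pi) Real.pi, s.indicator (fun z => f z.2) (θ, t) ∂ν := by
        apply lintegral_lintegral_swap
        exact ((hf.comp measurable_snd).indicator hs).aemeasurable
    _ ≤ _ := by
        apply lintegral_mono
        intro t
        have h1 : ∀ θ, s.indicator (fun z => f z.2) (θ, t) =
            (Set.Ioo (t - δ) (t + δ)).indicator (fun _ => f t) θ := by
          intro θ
          by_cases h : (θ, t) ∈ s
          · have h2 : θ ∈ Set.Ioo (t - δ) (t + δ) :=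
              ⟨by linarith [h.2], by linarith [h.1]⟩
            simp [h, h2]
          · have h2 : θ ∉ Set.Ioo (t - δ) (t + δ) := fun h2 =>
              h ⟨by linarith [h2.2], by linarith [h2.1]⟩
            rw [Set.indicator_of_notMem h, Set.indicator_of_notMem h2]
        simp only [h1]
        refine (lintegral_mono' Measure.restrict_le_self le_rfl).trans ?_
        rw [lintegral_indicator measurableSet_Ioo, setLIntegral_const]

lemma aux_shift (g : ℝ → ENNReal) (c a b : ℝ) (hg : ∀ t, g (t + c) = g t) :
    ∫⁻ t in Set.Ico (a + c) (b + c), g t = ∫⁻ t in Set.Ico a b, g t := by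
  have h := (measurePreserving_add_right (volume : Measure ℝ) c).setLIntegral_comp_preimage_emb
    (MeasurableEquiv.addRight c).measurableEmbedding g (Set.Ico (a + c) (b + c))
  rw [← h]
  simp [hg]

theorem aux_main (ν : Measure ℝ) [SFinite ν]
    (hper : ∀ A : Set ℝ, MeasurableSet A → ν ((fun x => x + 2 * Real.pi) ⁻¹' A) = ν A)
    (p : ℝ) (hp : 1 ≤ p) (δ : ℝ) (hδπ : δ < Real.pi) :
    ENNReal.ofReal δ * ∫⁻ θ in Set.Ico (-Real.pi) Real.pi,
        (ν (Set.Ioo (θ - δ) (θ + δ))) ^ (p - 1) ∂ν ≤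
      2 ^ (p + 1) *
        ∫⁻ θ in Set.Ico (-Real.pi) Real.pi, (ν (Set.Ioo (θ - δ) (θ + δ))) ^ p := by
  have hm := aux_meas ν δ
  have hq : 0 ≤ p - 1 := by linarith
  have hP : ∀ t, ν (Set.Ioo (t + 2 * Real.pi - δ) (t + 2 * Real.pi + δ)) =
      ν (Set.Ioo (t - δ) (t + δ)) := by
    intro t
    rw [← hper _ measurableSet_Ioo]
    congr 1
    ext x
    simp only [Set.mem_preimage, Set.mem_Ioo]
    constructor <;> rintro ⟨h1, h2⟩ <;> constructor <;> linarith
  have hpow : ∀ x : ENNReal, x ^ (p - 1) * x = x ^ p := by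
    intro x
    conv_lhs => rw [← ENNReal.rpow_one x, ENNReal.rpow_one x]
    have := ENNReal.rpow_add_of_nonneg (x := x) (p - 1) 1 hq zero_le_one
    rw [ENNReal.rpow_one] at this
    rw [← this]; congr 1; ring
  set g : ℝ → ENNReal := fun t => (ν (Set.Ioo (t - δ) (t + δ))) ^ p with hg
  have hgp : ∀ t, g (t + 2 * Real.pi) = g t := fun t => by simp only [hg, hP]
  have hgp' : ∀ t, g (t + -(2 * Real.pi)) = g t := fun t => by
    rw [← hgp (t + -(2 * Real.pi))]; congr 1; ring
  have h3 : ∫⁻ t in Set.Ico (-(3 * Real.pi)) (3 * Real.pi), g t ≤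
      3 * ∫⁻ t in Set.Ico (-Real.pi) Real.pi, g t := by
    have e1 := aux_shift g (2 * Real.pi) (-Real.pi) Real.pi hgp
    have e2 := aux_shift g (-(2 * Real.pi)) (-Real.pi) Real.pi hgp'
    calc ∫⁻ t in Set.Ico (-(3 * Real.pi)) (3 * Real.pi), g t
        ≤ ∫⁻ t in (Set.Ico (-Real.pi + -(2 * Real.pi)) (Real.pi + -(2 * Real.pi)) ∪
            Set.Ico (-Real.pi) Real.pi) ∪
            Set.Ico (-Real.pi + (2 * Real.pi)) (Real.pi + (2 * Real.pi)), g t := by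
          apply lintegral_mono_set
          intro x hx
          have h1 := hx.1
          have h2 := hx.2
          rcases lt_or_ge x (-Real.pi) with h | h
          · left; left; exact ⟨by linarith, by linarith⟩
          rcases lt_or_ge x (Real.pi) with h' | h'
          · left; right; exact ⟨by linarith, by linarith⟩
          · right; exact ⟨by linarith, by linarith⟩
      _ ≤ _ := by
          refine (lintegral_union_le _ _ _).trans ?_
          refine (add_le_add_left (lintegral_union_le _ _ _) _).trans ?_
          rw [e1, e2]
          apply le_of_eq; ring
  calc ENNReal.ofReal δ * ∫⁻ θ in Set.Ico (-Real.pi) Real.pi,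
        (ν (Set.Ioo (θ - δ) (θ + δ))) ^ (p - 1) ∂ν
      = ∫⁻ θ in Set.Ico (-Real.pi) Real.pi,
        ENNReal.ofReal δ * (ν (Set.Ioo (θ - δ) (θ + δ))) ^ (p - 1) ∂ν := by
        rw [lintegral_const_mul' _ _ ENNReal.ofReal_ne_top]
    _ ≤ ∫⁻ θ in Set.Ico (-Real.pi) Real.pi, 2 ^ (p - 1) *
          (∫⁻ t in Set.Ioo (θ - δ) (θ + δ), (ν (Set.Ioo (t - δ) (t + δ))) ^ (p - 1)) ∂ν :=
        lintegral_mono fun θ => aux_pt ν (p - 1) hq δ θ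
    _ = 2 ^ (p - 1) * ∫⁻ θ in Set.Ico (-Real.pi) Real.pi,
          (∫⁻ t in Set.Ioo (θ - δ) (θ + δ), (ν (Set.Ioo (t - δ) (t + δ))) ^ (p - 1)) ∂ν := by
        rw [lintegral_const_mul' _ _ (ENNReal.rpow_ne_top_of_nonneg hq (by simp))]
    _ ≤ 2 ^ (p - 1) * ∫⁻ t in Set.Ico (-(3 * Real.pi)) (3 * Real.pi), g t := by
        gcongr 2 ^ (p - 1) * ?_
        refine (aux_fub ν _ (hm.pow_const (p - 1)) δ hδπ).trans (le_of_eq ?_)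
        simp only [hpow, hg]
    _ ≤ 2 ^ (p - 1) * (4 * ∫⁻ t in Set.Ico (-Real.pi) Real.pi, g t) := by
        gcongr 2 ^ (p - 1) * ?_
        refine h3.trans ?_
        gcongr
        norm_num
    _ = _ := by
        rw [← mul_assoc]
        congr 1
        rw [show p + 1 = (p - 1) + 2 by ring,
          ENNReal.rpow_add_of_nonneg _ _ hq (by norm_num)]
        norm_num

/-- If `ν` is a `2π`-periodic positive Borel measure on `ℝ`, finite on
compact sets, `p ≥ 1` and `δ ∈ (0,π)`, then
`∫_{[-π,π)} ν((θ-δ,θ+δ))^{p-1} dν(θ) ≤ (2^{p+1}/δ)·∫_{[-π,π)} ν((θ-δ,θ+δ))^p dθ`. -/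
theorem stmt6 (ν : Measure ℝ) [IsFiniteMeasureOnCompacts ν]
    (hper : ∀ A : Set ℝ, MeasurableSet A → ν ((fun x => x + 2 * Real.pi) ⁻¹' A) = ν A)
    (p : ℝ) (hp : 1 ≤ p) (δ : ℝ) (hδ0 : 0 < δ) (hδπ : δ < Real.pi) :
    ∫ θ in Set.Ico (-Real.pi) Real.pi,
        (ν (Set.Ioo (θ - δ) (θ + δ))).toReal ^ (p - 1) ∂ν ≤
      (2 ^ (p + 1) / δ) *
        ∫ θ in Set.Ico (-Real.pi) Real.pi, (ν (Set.Ioo (θ - δ) (θ + δ))).toReal ^ p := by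
  have hm := aux_meas ν δ
  have hq : 0 ≤ p - 1 := by linarith
  have hp0 : 0 ≤ p := by linarith
  have hfin : ∀ t, ν (Set.Ioo (t - δ) (t + δ)) < ⊤ := fun t => measure_Ioo_lt_top
  have hmain := aux_main ν hper p hp δ hδπ
  simp only [ENNReal.toReal_rpow]
  rw [integral_toReal (hm.pow_const _).aemeasurable
      (Filter.Eventually.of_forall fun t => ENNReal.rpow_lt_top_of_nonneg hq (hfin t).ne),
    integral_toReal (hm.pow_const _).aemeasurable
      (Filter.Eventually.of_forall fun t => ENNReal.rpow_lt_top_of_nonneg hp0 (hfin t).ne)]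
  have hR : ∫⁻ θ in Set.Ico (-Real.pi) Real.pi, (ν (Set.Ioo (θ - δ) (θ + δ))) ^ p ≠ ⊤ := by
    have hle : ∫⁻ θ in Set.Ico (-Real.pi) Real.pi, (ν (Set.Ioo (θ - δ) (θ + δ))) ^ p ≤
        ∫⁻ θ in Set.Ico (-Real.pi) Real.pi,
          (ν (Set.Ioo (-Real.pi - δ) (Real.pi + δ))) ^ p := by
      apply setLIntegral_mono' measurableSet_Ico
      intro t ht
      refine ENNReal.rpow_le_rpow (measure_mono ?_) hp0
      intro x hx
      exact ⟨by linarith [hx.1, ht.1], by linarith [hx.2, ht.2]⟩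
    refine ne_top_of_le_ne_top ?_ hle
    rw [setLIntegral_const]
    exact ENNReal.mul_ne_top (ENNReal.rpow_ne_top_of_nonneg hp0 measure_Ioo_lt_top.ne)
      (by simp)
  have h := ENNReal.toReal_mono
    (ENNReal.mul_ne_top (ENNReal.rpow_ne_top_of_nonneg (by linarith) (by simp)) hR) hmain
  rw [ENNReal.toReal_mul, ENNReal.toReal_mul, ENNReal.toReal_ofReal hδ0.le,
    ← ENNReal.toReal_rpow] at h
  rw [div_mul_eq_mul_div, le_div_iff₀ hδ0, mul_comm]
  simpa using h
end

section
/- Let ν be a positive Borel measure on ℝ that is 2π-periodic (ν(A + 2π) = ν(A) for every Borel set A) and finite on compact sets, and let δ ∈ (0,π). Then ν([−π,π)) ≤ 2 ∫_{[−π,π)} (ν([x−δ/2, x+δ/2))/δ) dx, and consequently ν([−π,π)) ≤ 2 ∫_{[−π,π)} (ν((x−δ, x+δ))/δ) dx. -/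
open MeasureTheory

theorem stmt7_aux (ν : Measure ℝ) [IsFiniteMeasureOnCompacts ν]
    (δ : ℝ) (hδ0 : 0 < δ) (hδπ : δ < Real.pi) (S : ℝ → Set ℝ)
    (hS : MeasurableSet {p : ℝ × ℝ | p.2 ∈ S p.1})
    (hlo : ∀ x y, x - δ / 2 < y → y < x + δ / 2 → y ∈ S x)
    (hhi : ∀ x, S x ⊆ Set.Icc (x - δ) (x + δ)) :
    (ν (Set.Ico (-Real.pi) Real.pi)).toReal ≤
        2 * ∫ x in Set.Ico (-Real.pi) Real.pi, (ν (S x)).toReal / δ := by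
  have hpi := Real.pi_pos
  set I := Set.Ico (-Real.pi) Real.pi with hI
  have hm : Measurable (fun x => ν (S x)) := measurable_measure_prodMk_left hS
  have hfin : ∀ x, ν (S x) < ⊤ := fun x =>
    (measure_mono (hhi x)).trans_lt isCompact_Icc.measure_lt_top
  rw [integral_div, integral_toReal hm.aemeasurable (Filter.Eventually.of_forall hfin)]
  have hup : ∫⁻ x in I, ν (S x) < ⊤ := by
    calc ∫⁻ x in I, ν (S x)
        ≤ ∫⁻ x in I, ν (Set.Icc (-(2 * Real.pi)) (2 * Real.pi)) := by
          refine setLIntegral_mono measurable_const fun x hx => measure_mono ?_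
          refine (hhi x).trans (Set.Icc_subset_Icc ?_ ?_)
          · linarith [hx.1]
          · linarith [hx.2]
      _ < ⊤ := by
          rw [setLIntegral_const]
          refine ENNReal.mul_lt_top isCompact_Icc.measure_lt_top ?_
          rw [hI, Real.volume_Ico]; exact ENNReal.ofReal_lt_top
  have hlow : ENNReal.ofReal (δ / 2) * ν I ≤ ∫⁻ x in I, ν (S x) := by
    have h1 := Measure.prod_apply (μ := volume.restrict I) (ν := ν) hS
    have h2 := Measure.prod_apply_symm (μ := volume.restrict I) (ν := ν) hS
    have h3 : ∫⁻ x in I, ν (S x) =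
      ∫⁻ y, (volume.restrict I) ((fun x => (x, y)) ⁻¹' {p : ℝ × ℝ | p.2 ∈ S p.1}) ∂ν := h1.symm.trans h2
    rw [h3, ← setLIntegral_const]
    refine le_trans ?_ (setLIntegral_le_lintegral I _)
    refine setLIntegral_mono' measurableSet_Ico fun y hy => ?_
    rw [Measure.restrict_apply' measurableSet_Ico]
    rcases le_total y 0 with h | h
    · have : ENNReal.ofReal (δ / 2) = volume (Set.Ioo y (y + δ / 2)) := by
        rw [Real.volume_Ioo]; congr 1; ring
      rw [this]
      refine measure_mono fun x hx => ⟨hlo x y ?_ ?_, ?_, ?_⟩ <;> linarith [hx.1, hx.2, hy.1, hy.2]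
    · have : ENNReal.ofReal (δ / 2) = volume (Set.Ioo (y - δ / 2) y) := by
        rw [Real.volume_Ioo]; congr 1; ring
      rw [this]
      refine measure_mono fun x hx => ⟨hlo x y ?_ ?_, ?_, ?_⟩ <;> linarith [hx.1, hx.2, hy.1, hy.2]
  have h := ENNReal.toReal_mono hup.ne hlow
  rw [ENNReal.toReal_mul, ENNReal.toReal_ofReal (by positivity)] at h
  rw [← mul_div_assoc, le_div_iff₀ hδ0]
  linarith



/-- If `ν` is a `2π`-periodic positive Borel measure on `ℝ`, finite on
compact sets, and `δ ∈ (0,π)`, then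
`ν([-π,π)) ≤ 2 ∫_{[-π,π)} ν([x-δ/2,x+δ/2))/δ dx` and consequently
`ν([-π,π)) ≤ 2 ∫_{[-π,π)} ν((x-δ,x+δ))/δ dx`. -/
theorem stmt7 (ν : Measure ℝ) [IsFiniteMeasureOnCompacts ν]
    (hper : ∀ A : Set ℝ, MeasurableSet A → ν ((fun x => x + 2 * Real.pi) ⁻¹' A) = ν A)
    (δ : ℝ) (hδ0 : 0 < δ) (hδπ : δ < Real.pi) :
    (ν (Set.Ico (-Real.pi) Real.pi)).toReal ≤
        2 * ∫ x in Set.Ico (-Real.pi) Real.pi,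
          (ν (Set.Ico (x - δ / 2) (x + δ / 2))).toReal / δ ∧
      (ν (Set.Ico (-Real.pi) Real.pi)).toReal ≤
        2 * ∫ x in Set.Ico (-Real.pi) Real.pi,
          (ν (Set.Ioo (x - δ) (x + δ))).toReal / δ := by
  refine ⟨stmt7_aux ν δ hδ0 hδπ (fun x => Set.Ico (x - δ / 2) (x + δ / 2)) ?_ ?_ ?_,
    stmt7_aux ν δ hδ0 hδπ (fun x => Set.Ioo (x - δ) (x + δ)) ?_ ?_ ?_⟩
  · exact (measurableSet_le (f := fun p : ℝ × ℝ => p.1 - δ / 2) (g := fun p : ℝ × ℝ => p.2)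
      (by fun_prop) (by fun_prop)).inter
      (measurableSet_lt (f := fun p : ℝ × ℝ => p.2) (g := fun p : ℝ × ℝ => p.1 + δ / 2)
      (by fun_prop) (by fun_prop))
  · exact fun x y h1 h2 => ⟨h1.le, h2⟩
  · exact fun x y hy => ⟨by linarith [hy.1], by linarith [hy.2]⟩
  · exact (measurableSet_lt (f := fun p : ℝ × ℝ => p.1 - δ) (g := fun p : ℝ × ℝ => p.2)
      (by fun_prop) (by fun_prop)).inter
      (measurableSet_lt (f := fun p : ℝ × ℝ => p.2) (g := fun p : ℝ × ℝ => p.1 + δ)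
      (by fun_prop) (by fun_prop))
  · exact fun x y h1 h2 => ⟨by linarith, by linarith⟩
  · exact fun x => Set.Ioo_subset_Icc_self
end

section
/- Let μ be a positive Borel measure on ℝ that is 1-periodic (μ(A + 1) = μ(A) for every Borel set A) and finite on compact sets, let p ≥ 1, δ ∈ (0,1), and set C = μ([0,1)). Then ∫₀¹ μ((x−δ, x+δ))^p dx ≤ 3·(2C)^p·δ. In particular (∫₀¹ μ((x−δ, x+δ))^p dx)^{1/p} = O(δ^{1/p}) as δ ↓ 0. -/
open MeasureTheory

lemma aux_shift_s15 (μ : Measure ℝ)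
    (hper : ∀ A : Set ℝ, MeasurableSet A → μ ((fun x => x + 1) ⁻¹' A) = μ A) (a b : ℝ) :
    μ (Set.Ico (a + 1) (b + 1)) = μ (Set.Ico a b) := by
  rw [← hper _ measurableSet_Ico]
  congr 1
  ext x
  simp

lemma aux_split (μ : Measure ℝ) {a b c : ℝ} (h1 : a ≤ b) (h2 : b ≤ c) :
    μ (Set.Ico a c) = μ (Set.Ico a b) + μ (Set.Ico b c) := by
  rw [← Set.Ico_union_Ico_eq_Ico h1 h2, measure_union _ measurableSet_Ico]
  rw [Set.Ico_disjoint_Ico]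
  simp [h1, h2]

lemma aux_period0 (μ : Measure ℝ)
    (hper : ∀ A : Set ℝ, MeasurableSet A → μ ((fun x => x + 1) ⁻¹' A) = μ A) (a : ℝ)
    (h0 : 0 ≤ a) (h1 : a ≤ 1) : μ (Set.Ico a (a + 1)) = μ (Set.Ico 0 1) := by
  rw [aux_split μ h1 (by linarith : (1:ℝ) ≤ a + 1), aux_split μ h0 h1,
    ← aux_shift_s15 μ hper 0 a, zero_add, add_comm]

lemma aux_period (μ : Measure ℝ)
    (hper : ∀ A : Set ℝ, MeasurableSet A → μ ((fun x => x + 1) ⁻¹' A) = μ A) (a : ℝ)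
    (h0 : -1 ≤ a) (h1 : a ≤ 1) : μ (Set.Ico a (a + 1)) = μ (Set.Ico 0 1) := by
  rcases le_total 0 a with h | h
  · exact aux_period0 μ hper a h h1
  · rw [← aux_shift_s15 μ hper]
    exact aux_period0 μ hper (a + 1) (by linarith) (by linarith)

lemma aux_bound (μ : Measure ℝ)
    (hper : ∀ A : Set ℝ, MeasurableSet A → μ ((fun x => x + 1) ⁻¹' A) = μ A)
    (δ : ℝ) (hδ0 : 0 < δ) (hδ1 : δ < 1) (x : ℝ) (hx : x ∈ Set.Icc (0:ℝ) 1) :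
    μ (Set.Ioo (x - δ) (x + δ)) ≤ 2 * μ (Set.Ico 0 1) := by
  have hsub : Set.Ioo (x - δ) (x + δ) ⊆ Set.Ico (x - δ) (x - δ + 1 + 1) := by
    intro y hy
    exact ⟨hy.1.le, by linarith [hy.2]⟩
  refine (measure_mono hsub).trans ?_
  rw [aux_split μ (by linarith : x - δ ≤ x - δ + 1) (by linarith), aux_shift_s15 μ hper,
    aux_period μ hper _ (by linarith [hx.1]) (by linarith [hx.2]), two_mul]

lemma aux_set (δ : ℝ) :
    MeasurableSet {q : ℝ × ℝ | q.2 ∈ Set.Ioo (q.1 - δ) (q.1 + δ)} := by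
  apply IsOpen.measurableSet
  have h1 : IsOpen {q : ℝ × ℝ | q.1 - δ < q.2} := isOpen_lt (by fun_prop) (by fun_prop)
  have h2 : IsOpen {q : ℝ × ℝ | q.2 < q.1 + δ} := isOpen_lt (by fun_prop) (by fun_prop)
  exact h1.inter h2

lemma aux_tonelli (μ : Measure ℝ) [IsFiniteMeasureOnCompacts μ]
    (hper : ∀ A : Set ℝ, MeasurableSet A → μ ((fun x => x + 1) ⁻¹' A) = μ A)
    (δ : ℝ) (hδ0 : 0 < δ) (hδ1 : δ < 1) :
    ∫⁻ x in Set.Icc (0:ℝ) 1, μ (Set.Ioo (x - δ) (x + δ)) ≤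
      ENNReal.ofReal (2 * δ) * (3 * μ (Set.Ico 0 1)) := by
  have e1 := Measure.prod_apply (μ := volume.restrict (Set.Icc (0:ℝ) 1)) (ν := μ) (aux_set δ)
  have e2 := Measure.prod_apply_symm (μ := volume.restrict (Set.Icc (0:ℝ) 1)) (ν := μ) (aux_set δ)
  have e3 := e1.symm.trans e2
  change ∫⁻ x in Set.Icc (0:ℝ) 1, μ (Set.Ioo (x - δ) (x + δ)) = _ at e3
  rw [e3]
  have h3 : μ (Set.Ico (-1) 2) = 3 * μ (Set.Ico 0 1) := by
    rw [aux_split μ (by norm_num : (-1:ℝ) ≤ 0) (by norm_num),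
      aux_split μ (by norm_num : (0:ℝ) ≤ 1) (by norm_num)]
    have a1 := aux_period μ hper (-1) (by norm_num) (by norm_num)
    have a2 := aux_period μ hper 1 (by norm_num) (by norm_num)
    norm_num at a1 a2
    rw [a1, a2]
    ring
  rw [← h3, ← lintegral_indicator_const measurableSet_Ico]
  refine lintegral_mono fun y => ?_
  by_cases hy : y ∈ Set.Ico (-1:ℝ) 2
  · rw [Set.indicator_of_mem hy]
    refine (Measure.restrict_apply_le _ _).trans ?_
    refine (measure_mono (t := Set.Ioo (y - δ) (y + δ)) ?_).trans ?_
    · rintro x ⟨hx1, hx2⟩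
      exact ⟨by simp at hx1 hx2; linarith, by simp at hx1 hx2; linarith⟩
    · rw [Real.volume_Ioo]
      apply ENNReal.ofReal_le_ofReal
      linarith
  · rw [Set.indicator_of_notMem hy, Measure.restrict_apply' measurableSet_Icc]
    refine le_of_eq ?_
    convert measure_empty (μ := (volume : Measure ℝ))
    ext x
    simp only [Set.mem_inter_iff, Set.mem_preimage, Set.mem_ofPred_eq, Set.mem_Ioo, Set.mem_Icc,
      Set.mem_empty_iff_false, iff_false]
    rintro ⟨⟨h1, h2⟩, h3, h4⟩
    exact hy ⟨by linarith, by linarith⟩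

/-- If `μ` is a `1`-periodic positive Borel measure on `ℝ`, finite on
compact sets, `p ≥ 1`, `δ ∈ (0,1)` and `C = μ([0,1))`, then
`∫₀¹ μ((x-δ,x+δ))^p dx ≤ 3·(2C)^p·δ`. -/
theorem stmt15 (μ : Measure ℝ) [IsFiniteMeasureOnCompacts μ]
    (hper : ∀ A : Set ℝ, MeasurableSet A → μ ((fun x => x + 1) ⁻¹' A) = μ A)
    (p : ℝ) (hp : 1 ≤ p) (δ : ℝ) (hδ0 : 0 < δ) (hδ1 : δ < 1) :
    ∫ x in Set.Icc (0 : ℝ) 1, (μ (Set.Ioo (x - δ) (x + δ))).toReal ^ p ≤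
      3 * (2 * (μ (Set.Ico (0 : ℝ) 1)).toReal) ^ p * δ := by
  have hfin : μ (Set.Ico (0:ℝ) 1) ≠ ⊤ :=
    ((measure_mono Set.Ico_subset_Icc_self).trans_lt isCompact_Icc.measure_lt_top).ne
  have hmeas : Measurable fun x : ℝ => μ (Set.Ioo (x - δ) (x + δ)) :=
    measurable_measure_prodMk_left (aux_set δ)
  have htop : ENNReal.ofReal (2 * δ) * (3 * μ (Set.Ico 0 1)) ≠ ⊤ :=
    ENNReal.mul_ne_top ENNReal.ofReal_ne_top (ENNReal.mul_ne_top (by norm_num) hfin)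
  have hT := aux_tonelli μ hper δ hδ0 hδ1
  have hlt : ∀ x : ℝ, μ (Set.Ioo (x - δ) (x + δ)) < ⊤ := fun x => measure_Ioo_lt_top
  have hint : Integrable (fun x : ℝ => (μ (Set.Ioo (x - δ) (x + δ))).toReal)
      (volume.restrict (Set.Icc (0:ℝ) 1)) :=
    integrable_toReal_of_lintegral_ne_top hmeas.aemeasurable (ne_top_of_le_ne_top htop hT)
  have hI : ∫ x in Set.Icc (0 : ℝ) 1, (μ (Set.Ioo (x - δ) (x + δ))).toReal ≤
      2 * δ * (3 * (μ (Set.Ico (0:ℝ) 1)).toReal) := by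
    rw [integral_toReal hmeas.aemeasurable (Filter.Eventually.of_forall hlt)]
    refine (ENNReal.toReal_mono htop hT).trans ?_
    rw [ENNReal.toReal_mul, ENNReal.toReal_mul, ENNReal.toReal_ofReal (by linarith)]
    simp
  have hb : ∀ x ∈ Set.Icc (0:ℝ) 1, (μ (Set.Ioo (x - δ) (x + δ))).toReal ≤
      2 * (μ (Set.Ico (0:ℝ) 1)).toReal := by
    intro x hx
    have := ENNReal.toReal_mono (ENNReal.mul_ne_top (by norm_num) hfin)
      (aux_bound μ hper δ hδ0 hδ1 x hx)
    simpa [ENNReal.toReal_mul] using this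
  have hC : 0 ≤ (μ (Set.Ico (0:ℝ) 1)).toReal := ENNReal.toReal_nonneg
  set C := (μ (Set.Ico (0:ℝ) 1)).toReal
  have hpow : ∀ t : ℝ, 0 ≤ t → t ^ p = t ^ (p - 1) * t := by
    intro t ht
    have := Real.rpow_add' (x := t) (y := p - 1) (z := 1) ht (by linarith)
    simpa using this
  calc ∫ x in Set.Icc (0 : ℝ) 1, (μ (Set.Ioo (x - δ) (x + δ))).toReal ^ p
      ≤ ∫ x in Set.Icc (0 : ℝ) 1, (2 * C) ^ (p - 1) * (μ (Set.Ioo (x - δ) (x + δ))).toReal := by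
        refine integral_mono_of_nonneg (Filter.Eventually.of_forall fun x => ?_)
          (hint.const_mul _) ?_
        · exact Real.rpow_nonneg ENNReal.toReal_nonneg _
        · filter_upwards [ae_restrict_mem measurableSet_Icc] with x hx
          rw [hpow _ ENNReal.toReal_nonneg]
          exact mul_le_mul_of_nonneg_right
            (Real.rpow_le_rpow ENNReal.toReal_nonneg (hb x hx) (by linarith))
            ENNReal.toReal_nonneg
    _ = (2 * C) ^ (p - 1) * ∫ x in Set.Icc (0 : ℝ) 1, (μ (Set.Ioo (x - δ) (x + δ))).toReal :=
        integral_const_mul _ _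
    _ ≤ (2 * C) ^ (p - 1) * (2 * δ * (3 * C)) :=
        mul_le_mul_of_nonneg_left hI (Real.rpow_nonneg (by linarith) _)
    _ = 3 * (2 * C) ^ p * δ := by
        rw [hpow (2 * C) (by linarith)]
        ring
end

section
/- Let q > −1 and p ∈ (1,∞) with p(q+1) > 1, and let f(z) = exp((1/(1−z))^{q+1}) on 𝔻, where (1−z)^{−(q+1)} is defined by the principal branch (so that f(0) = e); thus log|f(z)| = Re((1−z)^{−(q+1)}). Then m_p(r, log|f|) ≍ (1−r)^{1/p − q − 1} as r ↑ 1; that is, there exist constants c₁, c₂ > 0 and r₀ ∈ (0,1) such that c₁·(1−r)^{1/p−q−1} ≤ m_p(r, log|f|) ≤ c₂·(1−r)^{1/p−q−1} for all r ∈ (r₀, 1). -/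
open MeasureTheory Complex

/-- The `p`-th integral mean `m_p(r,u) = ((1/2π) ∫₀^{2π} |u(re^{iθ})|^p dθ)^{1/p}`. -/
noncomputable def mpMean (p r : ℝ) (u : ℂ → ℝ) : ℝ :=
  ((1 / (2 * Real.pi)) *
      ∫ θ in (0 : ℝ)..(2 * Real.pi),
        |u ((r : ℂ) * Complex.exp (θ * Complex.I))| ^ p) ^ (1 / p)

lemma aux_w (r θ : ℝ) :
    (1 - (r : ℂ) * Complex.exp (θ * Complex.I)).re = 1 - r * Real.cos θ ∧
    (1 - (r : ℂ) * Complex.exp (θ * Complex.I)).im = - (r * Real.sin θ) := by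
  constructor
  · simp [Complex.exp_ofReal_mul_I_re]
  · simp [Complex.exp_ofReal_mul_I_im]

lemma aux_norm (r θ : ℝ) :
    ‖1 - (r : ℂ) * Complex.exp (θ * Complex.I)‖ ^ 2
      = (1 - r) ^ 2 + 2 * r * (1 - Real.cos θ) := by
  rw [Complex.sq_norm, Complex.normSq_apply, (aux_w r θ).1, (aux_w r θ).2]
  linear_combination r ^ 2 * Real.sin_sq_add_cos_sq θ

lemma aux_re_pos (r θ : ℝ) (h0 : 0 < r) :
    1 - r ≤ (1 - (r : ℂ) * Complex.exp (θ * Complex.I)).re := by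
  rw [(aux_w r θ).1]
  nlinarith [Real.cos_le_one θ]

lemma aux_norm_lower (r θ : ℝ) (h0 : 1 / 2 < r) (hθ : |θ| ≤ Real.pi) :
    ((1 - r) + |θ|) / Real.pi ≤ ‖1 - (r : ℂ) * Complex.exp (θ * Complex.I)‖ := by
  have hpi := Real.pi_gt_three
  have hpi0 := Real.pi_pos
  apply le_of_abs_le
  apply abs_le_of_sq_le_sq _ (norm_nonneg _)
  rw [aux_norm, div_pow, div_le_iff₀ (by positivity)]
  have h := Real.cos_le_one_sub_mul_cos_sq hθ
  have h2 : 2 * θ ^ 2 ≤ (1 - Real.cos θ) * Real.pi ^ 2 := by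
    have : 2 / Real.pi ^ 2 * θ ^ 2 ≤ 1 - Real.cos θ := by linarith
    calc 2 * θ ^ 2 = (2 / Real.pi ^ 2 * θ ^ 2) * Real.pi ^ 2 := by field_simp
      _ ≤ _ := by gcongr
  have h3 : 2 * θ ^ 2 ≤ 2 * r * ((1 - Real.cos θ) * Real.pi ^ 2) := by
    nlinarith [sq_nonneg θ]
  have h4 : |θ| ^ 2 = θ ^ 2 := sq_abs θ
  have h5 : 2 * (1 - r) ^ 2 ≤ (1 - r) ^ 2 * Real.pi ^ 2 := by
    have : 2 ≤ Real.pi ^ 2 := by nlinarith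
    nlinarith [sq_nonneg (1 - r)]
  nlinarith [sq_nonneg (1 - r - |θ|)]

lemma aux_F_upper (r s p θ : ℝ) (hs : 0 < s) (hp : 0 < p) (h0 : 1 / 2 < r) (h1 : r < 1)
    (hθ : |θ| ≤ Real.pi) :
    |((1 - (r : ℂ) * Complex.exp (θ * Complex.I)) ^ ((-s : ℝ) : ℂ)).re| ^ p
      ≤ Real.pi ^ (p * s) * ((1 - r) + |θ|) ^ (-(p * s)) := by
  have hpi := Real.pi_pos
  have hd : 0 < (1 - r) + |θ| := by have := abs_nonneg θ; linarith
  have hl := aux_norm_lower r θ h0 hθ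
  rw [Complex.cpow_ofReal_re]
  set w := 1 - (r : ℂ) * Complex.exp (θ * Complex.I)
  have h2 : |‖w‖ ^ (-s) * Real.cos (w.arg * -s)| ≤ (((1 - r) + |θ|) / Real.pi) ^ (-s) := by
    rw [abs_mul, abs_of_nonneg (by positivity : 0 ≤ ‖w‖ ^ (-s))]
    calc _ ≤ ‖w‖ ^ (-s) * 1 := by gcongr; exact Real.abs_cos_le_one _
      _ ≤ _ := by
        rw [mul_one]
        exact Real.rpow_le_rpow_of_nonpos (by positivity) hl (by linarith)
  calc _ ≤ ((((1 - r) + |θ|) / Real.pi) ^ (-s)) ^ p := by gcongr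
    _ = _ := by
      rw [← Real.rpow_mul (by positivity), Real.div_rpow hd.le hpi.le,
        show -s * p = -(p * s) by ring, Real.rpow_neg hpi.le, div_inv_eq_mul, mul_comm]

lemma aux_int (a δ b : ℝ) (ha : 1 < a) (hδ : 0 < δ) (hb : 0 < b) :
    ∫ θ in (0:ℝ)..b, (δ + θ) ^ (-a) ≤ δ ^ (1 - a) / (a - 1) := by
  rw [intervalIntegral.integral_comp_add_left (fun x => x ^ (-a)) δ, integral_rpow]
  · rw [add_zero, show -a + 1 = 1 - a by ring, ← neg_div_neg_eq, neg_sub, neg_sub]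
    have : 0 ≤ (δ + b) ^ (1 - a) := by positivity
    have h1 : 0 < a - 1 := by linarith
    gcongr
    linarith
  · right
    refine ⟨by linarith, ?_⟩
    rw [Set.uIcc_of_le (by linarith)]
    intro h
    linarith [h.1]

lemma aux_cont (r s p : ℝ) (hp : 0 < p) (h0 : 0 < r) (h1 : r < 1) :
    Continuous fun θ : ℝ =>
      |((1 - (r : ℂ) * Complex.exp (θ * Complex.I)) ^ ((-s : ℝ) : ℂ)).re| ^ p := by
  apply Continuous.rpow_const
  · apply Continuous.abs
    apply Complex.continuous_re.comp
    apply Continuous.cpow (by fun_prop) continuous_const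
    intro θ
    left
    linarith [aux_re_pos r θ h0]
  · intro _
    right
    exact hp.le

lemma aux_upper (r s p : ℝ) (hs : 0 < s) (hp : 0 < p) (hps : 1 < p * s)
    (h0 : 1 / 2 < r) (h1 : r < 1) :
    ∫ θ in (0 : ℝ)..(2 * Real.pi),
      |((1 - (r : ℂ) * Complex.exp (θ * Complex.I)) ^ ((-s : ℝ) : ℂ)).re| ^ p
      ≤ (2 * Real.pi ^ (p * s) / (p * s - 1)) * (1 - r) ^ (1 - p * s) := by
  have hpi := Real.pi_pos
  have hI := aux_int (p * s) (1 - r) (2 * Real.pi) hps (by linarith) (by linarith)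
  have hcg : ContinuousOn (fun θ : ℝ => (1 - r + θ) ^ (-(p * s))) (Set.uIcc 0 (2 * Real.pi)) := by
    apply ContinuousOn.rpow_const (by fun_prop)
    intro x hx
    rw [Set.uIcc_of_le (by linarith)] at hx
    left
    linarith [hx.1]
  have hcg2 : ContinuousOn (fun θ : ℝ => (1 - r + (2 * Real.pi - θ)) ^ (-(p * s)))
      (Set.uIcc 0 (2 * Real.pi)) := by
    apply ContinuousOn.rpow_const (by fun_prop)
    intro x hx
    rw [Set.uIcc_of_le (by linarith)] at hx
    left
    linarith [hx.2]
  have hrefl : ∫ θ in (0:ℝ)..(2 * Real.pi), (1 - r + (2 * Real.pi - θ)) ^ (-(p * s))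
      = ∫ θ in (0:ℝ)..(2 * Real.pi), (1 - r + θ) ^ (-(p * s)) := by
    rw [intervalIntegral.integral_comp_sub_left (fun x => (1 - r + x) ^ (-(p * s))) (2 * Real.pi)]
    simp
  calc _ ≤ ∫ θ in (0 : ℝ)..(2 * Real.pi), Real.pi ^ (p * s) *
        ((1 - r + θ) ^ (-(p * s)) + (1 - r + (2 * Real.pi - θ)) ^ (-(p * s))) := by
        apply intervalIntegral.integral_mono_on (by linarith)
        · exact (aux_cont r s p hp (by linarith) h1).intervalIntegrable _ _
        · exact ((hcg.intervalIntegrable).add hcg2.intervalIntegrable).const_mul _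
        · intro θ hθ
          have hn1 : 0 ≤ (1 - r + θ) ^ (-(p * s)) :=
            Real.rpow_nonneg (by linarith [hθ.1]) _
          have hn2 : 0 ≤ (1 - r + (2 * Real.pi - θ)) ^ (-(p * s)) :=
            Real.rpow_nonneg (by linarith [hθ.2]) _
          rcases le_total θ Real.pi with h | h
          · have := aux_F_upper r s p θ hs hp h0 h1 (by rwa [abs_of_nonneg hθ.1])
            rw [abs_of_nonneg hθ.1] at this
            refine this.trans ?_
            gcongr
            linarith
          · have ha : |θ - 2 * Real.pi| = 2 * Real.pi - θ := by
              rw [abs_of_nonpos (by linarith [hθ.2])]; ring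
            have := aux_F_upper r s p (θ - 2 * Real.pi) hs hp h0 h1 (by rw [ha]; linarith)
            rw [ha] at this
            have he : Complex.exp (((θ - 2 * Real.pi : ℝ) : ℂ) * Complex.I)
                = Complex.exp (θ * Complex.I) := by
              push_cast
              rw [sub_mul]
              exact Complex.exp_periodic.sub_eq _
            rw [he] at this
            refine this.trans ?_
            gcongr
            linarith
    _ = Real.pi ^ (p * s) * (2 * ∫ θ in (0:ℝ)..(2 * Real.pi), (1 - r + θ) ^ (-(p * s))) := by
        rw [intervalIntegral.integral_const_mul,
          intervalIntegral.integral_add hcg.intervalIntegrable hcg2.intervalIntegrable, hrefl]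
        ring
    _ ≤ Real.pi ^ (p * s) * (2 * ((1 - r) ^ (1 - p * s) / (p * s - 1))) := by gcongr
    _ = _ := by ring

lemma aux_F_lower (r s p η θ : ℝ) (hs : 0 < s) (hp : 0 < p) (h0 : 0 < r) (h1 : r < 1)
    (hη : η ≤ 1) (hηs : η * s ≤ 1) (hθ0 : 0 ≤ θ) (hθ : θ ≤ η * (1 - r)) :
    ((1 / 2) * 2 ^ (-s)) ^ p * (1 - r) ^ (-(p * s)) ≤
    |((1 - (r : ℂ) * Complex.exp (θ * Complex.I)) ^ ((-s : ℝ) : ℂ)).re| ^ p := by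
  have hd : 0 < 1 - r := by linarith
  have hre := aux_re_pos r θ h0
  have him := (aux_w r θ).2
  have hnorm := aux_norm r θ
  rw [Complex.cpow_ofReal_re]
  set w := 1 - (r : ℂ) * Complex.exp (θ * Complex.I)
  have hrepos : 0 < w.re := by linarith
  have hθd : θ ≤ 1 - r := hθ.trans (by nlinarith)
  have hn : ‖w‖ ≤ 2 * (1 - r) := by
    apply le_of_abs_le
    apply abs_le_of_sq_le_sq _ (by linarith)
    rw [hnorm]
    have := Real.one_sub_sq_div_two_le_cos (x := θ)
    nlinarith [Real.cos_le_one θ]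
  have hnpos : 0 < ‖w‖ := by
    rw [norm_pos_iff]; intro h; rw [h] at hrepos; simp at hrepos
  have harg : |w.arg| ≤ η := by
    have h2 : |w.arg| < Real.pi / 2 := Complex.abs_arg_lt_pi_div_two_iff.2 (Or.inl hrepos)
    have h3 := Real.le_tan (abs_nonneg _) h2
    have h4 : Real.tan |w.arg| = |w.im| / w.re := by
      have ht := Complex.tan_arg w
      have h5 : |Real.tan w.arg| = |w.im| / w.re := by
        rw [ht, abs_div, abs_of_pos hrepos]
      rw [← h5]
      have h6 : 0 ≤ Real.tan |w.arg| := (abs_nonneg _).trans h3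
      rcases abs_choice w.arg with h | h
      · rw [h] at h6 ⊢; rw [abs_of_nonneg h6]
      · rw [h] at h6 ⊢; rw [Real.tan_neg] at h6 ⊢; rw [abs_of_nonpos (by linarith)]
    rw [h4] at h3
    refine h3.trans ?_
    rw [div_le_iff₀ hrepos, him, abs_neg, abs_mul, abs_of_pos h0]
    have h7 : |Real.sin θ| ≤ θ := by
      have := Real.abs_sin_le_abs (x := θ)
      rwa [abs_of_nonneg hθ0] at this
    have h8 : 0 ≤ η := by
      by_contra h
      push Not at h
      nlinarith
    calc r * |Real.sin θ| ≤ 1 * θ := by gcongr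
      _ ≤ η * (1 - r) := by linarith
      _ ≤ _ := by gcongr
  have hcos : 1 / 2 ≤ Real.cos (w.arg * -s) := by
    have h2 : (w.arg * -s) ^ 2 ≤ 1 := by
      rw [sq_le_one_iff_abs_le_one, abs_mul, abs_neg, abs_of_pos hs]
      exact (mul_le_mul_of_nonneg_right harg hs.le).trans hηs
    have := Real.one_sub_sq_div_two_le_cos (x := w.arg * -s)
    linarith
  have hpw : (2 * (1 - r)) ^ (-s) ≤ ‖w‖ ^ (-s) :=
    Real.rpow_le_rpow_of_nonpos hnpos hn (by linarith)
  calc _ = ((2 * (1 - r)) ^ (-s) * (1 / 2)) ^ p := by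
        rw [Real.mul_rpow (by norm_num) hd.le, show -(p * s) = -s * p by ring,
          Real.rpow_mul hd.le, ← Real.mul_rpow (by positivity) (by positivity)]
        congr 1; ring
    _ ≤ (‖w‖ ^ (-s) * Real.cos (w.arg * -s)) ^ p := by gcongr
    _ ≤ _ := by
        gcongr
        exact le_abs_self _

lemma aux_lower (r s p η : ℝ) (hs : 0 < s) (hp : 0 < p) (h0 : 0 < r) (h1 : r < 1)
    (hη0 : 0 < η) (hη : η ≤ 1) (hηs : η * s ≤ 1) :
    (η * ((1 / 2) * 2 ^ (-s)) ^ p) * (1 - r) ^ (1 - p * s) ≤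
    ∫ θ in (0 : ℝ)..(2 * Real.pi),
      |((1 - (r : ℂ) * Complex.exp (θ * Complex.I)) ^ ((-s : ℝ) : ℂ)).re| ^ p := by
  have hd : 0 < 1 - r := by linarith
  have hb0 : 0 ≤ η * (1 - r) := by positivity
  have hb : η * (1 - r) ≤ 2 * Real.pi := by nlinarith [Real.pi_gt_three]
  have hc := aux_cont r s p hp h0 h1
  calc _ = ∫ θ in (0:ℝ)..(η * (1 - r)), ((1 / 2) * 2 ^ (-s)) ^ p * (1 - r) ^ (-(p * s)) := by
        rw [intervalIntegral.integral_const, smul_eq_mul, sub_zero,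
          show 1 - p * s = 1 + -(p * s) by ring, Real.rpow_add hd, Real.rpow_one]
        ring
    _ ≤ ∫ θ in (0:ℝ)..(η * (1 - r)),
      |((1 - (r : ℂ) * Complex.exp (θ * Complex.I)) ^ ((-s : ℝ) : ℂ)).re| ^ p := by
        apply intervalIntegral.integral_mono_on hb0 (by simp) (hc.intervalIntegrable _ _)
        intro θ hθ
        exact aux_F_lower r s p η θ hs hp h0 h1 hη hηs hθ.1 hθ.2
    _ ≤ _ := by
        apply intervalIntegral.integral_mono_interval le_rfl hb0 hb _ (hc.intervalIntegrable _ _)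
        exact Filter.Eventually.of_forall fun θ => by positivity

/-- For `q > -1`, `p ∈ (1,∞)` with `p(q+1) > 1` and
`f(z) = exp((1/(1-z))^{q+1})` (principal branch), so that
`log|f(z)| = Re((1-z)^{-(q+1)})`, one has `m_p(r, log|f|) ≍ (1-r)^{1/p-q-1}`
as `r ↑ 1`. -/
theorem stmt18 (q p : ℝ) (hq : -1 < q) (hp : 1 < p) (hpq : 1 < p * (q + 1)) :
    ∃ c₁ c₂ : ℝ, 0 < c₁ ∧ 0 < c₂ ∧ ∃ r₀ ∈ Set.Ioo (0 : ℝ) 1, ∀ r ∈ Set.Ioo r₀ 1,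
      c₁ * (1 - r) ^ (1 / p - q - 1) ≤
          mpMean p r (fun z => ((1 - z) ^ (-((q : ℂ) + 1))).re) ∧
        mpMean p r (fun z => ((1 - z) ^ (-((q : ℂ) + 1))).re) ≤
          c₂ * (1 - r) ^ (1 / p - q - 1) := by
  have hs : 0 < q + 1 := by linarith
  have hp0 : 0 < p := by linarith
  have hpi := Real.pi_pos
  obtain ⟨η, hη0, hη, hηs⟩ : ∃ η : ℝ, 0 < η ∧ η ≤ 1 ∧ η * (q + 1) ≤ 1 := by
    refine ⟨min 1 (1 / (q + 1)), by positivity, min_le_left _ _, ?_⟩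
    calc _ ≤ 1 / (q + 1) * (q + 1) := by gcongr; exact min_le_right _ _
      _ = 1 := by field_simp
  have hA : 0 < η * ((1 / 2) * 2 ^ (-(q + 1))) ^ p := by positivity
  have hB : 0 < 2 * Real.pi ^ (p * (q + 1)) / (p * (q + 1) - 1) := by
    have : 0 < p * (q + 1) - 1 := by linarith
    positivity
  set A := η * ((1 / 2) * 2 ^ (-(q + 1))) ^ p with hAdef
  set B := 2 * Real.pi ^ (p * (q + 1)) / (p * (q + 1) - 1) with hBdef
  refine ⟨(1 / (2 * Real.pi) * A) ^ (1 / p), (1 / (2 * Real.pi) * B) ^ (1 / p),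
    by positivity, by positivity, 1 / 2, by norm_num, ?_⟩
  intro r hr
  have hd : 0 < 1 - r := by linarith [hr.2]
  have hr0 : 0 < r := by linarith [hr.1]
  have hexp : ∀ C : ℝ, 0 < C → (1 / (2 * Real.pi) * C) ^ (1 / p) * (1 - r) ^ (1 / p - q - 1)
      = (1 / (2 * Real.pi) * (C * (1 - r) ^ (1 - p * (q + 1)))) ^ (1 / p) := by
    intro C hC
    rw [← mul_assoc, Real.mul_rpow (x := 1 / (2 * Real.pi) * C) (by positivity) (by positivity),
      ← Real.rpow_mul hd.le]
    congr 2
    field_simp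
    ring
  have hcast : (-((q : ℂ) + 1)) = ((-(q + 1) : ℝ) : ℂ) := by push_cast; ring
  have hl := aux_lower r (q + 1) p η hs hp0 hr0 hr.2 hη0 hη hηs
  have hu := aux_upper r (q + 1) p hs hp0 hpq hr.1 hr.2
  rw [← hAdef] at hl
  rw [← hBdef] at hu
  rw [hexp A hA, hexp B hB]
  unfold mpMean
  rw [hcast]
  have hI0 := (by positivity : 0 ≤ A * (1 - r) ^ (1 - p * (q + 1))).trans hl
  constructor
  · gcongr
  · gcongr
end
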